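/- Let t ≤ m be positive integers, F = GaloisField 2 m, T = GaloisField 2 t. Let τ : F → T be a surjective 𝔽₂-linear map, π : F → F a bijection, and h : F → T arbitrary. Then f : F × F → T defined by f(x,y) = τ(x · π(y)) + h(y) (where x · π(y) is the field product in F) is a (2m,t)-bent function. -/

import Mathlib

noncomputable instance (n : ℕ) : Fintype (GaloisField 2 n) := Fintype.ofFinite _

/-- The sign character of `ZMod 2`: `chi 0 = 1`, `chi 1 = -1`. -/
def chi (x : ZMod 2) : ℤ := if x = 0 then 1 else -1

theorem chi_add (x y : ZMod 2) : chi (x + y) = chi x * chi y := by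
  revert x y
  decide

theorem chi_sq (x : ZMod 2) : chi x ^ 2 = 1 := by
  revert x
  decide

theorem chi_of_ne_zero {x : ZMod 2} (hx : x ≠ 0) : chi x = -1 := if_neg hx

/-- A nonzero linear functional over `ZMod 2` is balanced. -/
theorem sum_chi_eq_zero {V : Type*} [AddCommGroup V] [Module (ZMod 2) V] [Fintype V]
    {L : V →ₗ[ZMod 2] ZMod 2} (hL : L ≠ 0) : ∑ x, chi (L x) = 0 := by
  obtain ⟨v, hv⟩ := DFunLike.ne_iff.mp hL
  have key : ∑ x, chi (L x) = -∑ x, chi (L x) := by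
    rw [← Finset.sum_neg_distrib, ← Equiv.sum_comp (Equiv.addRight v)]
    refine Finset.sum_congr rfl fun x _ => ?_
    rw [Equiv.coe_addRight, map_add, chi_add, chi_of_ne_zero hv, mul_neg_one]
  lia

/-- Every linear functional on a finite separable extension is `x ↦ trace (c * x)`. -/
theorem exists_eq_trace_mul {K L : Type*} [Field K] [Field L] [Algebra K L]
    [FiniteDimensional K L] [Algebra.IsSeparable K L] (φ : L →ₗ[K] K) :
    ∃ c : L, ∀ x, φ x = Algebra.trace K L (c * x) :=
  ⟨((Algebra.traceForm K L).toDual (traceForm_nondegenerate K L)).symm φ, fun x =>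
    (LinearMap.BilinForm.apply_toDual_symm_apply (hB := traceForm_nondegenerate K L) φ x).symm⟩

theorem eq_zero_of_forall_trace_mul_eq_zero {K L : Type*} [Field K] [Field L] [Algebra K L]
    [FiniteDimensional K L] [Algebra.IsSeparable K L] {c : L}
    (hc : ∀ x, Algebra.trace K L (c * x) = 0) : c = 0 :=
  (traceForm_nondegenerate K L).1 c hc

open scoped Classical in
theorem sum_chi_trace_mul {m : ℕ} (hm : 0 < m) (c : GaloisField 2 m) :
    ∑ x, chi (Algebra.trace (ZMod 2) (GaloisField 2 m) (c * x)) = if c = 0 then 2 ^ m else 0 := by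
  split_ifs with hc
  · simp [hc, chi, ← Nat.card_eq_fintype_card, GaloisField.card 2 m hm.ne']
  · refine sum_chi_eq_zero
      (L := Algebra.trace (ZMod 2) (GaloisField 2 m) ∘ₗ LinearMap.mulLeft (ZMod 2) c) fun h0 => hc ?_
    exact eq_zero_of_forall_trace_mul_eq_zero fun x => LinearMap.congr_fun h0 x

theorem maiorana_mcfarland_type_is_bent
    (m t : ℕ) (hm : 0 < m) (ht : 0 < t) (htm : t ≤ m)
    (τ : GaloisField 2 m →ₗ[ZMod 2] GaloisField 2 t) (hτ : Function.Surjective τ)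
    (π : GaloisField 2 m → GaloisField 2 m) (hπ : Function.Bijective π)
    (h : GaloisField 2 m → GaloisField 2 t) :
    ∀ u : GaloisField 2 t, u ≠ 0 → ∀ a b : GaloisField 2 m,
      (∑ p : GaloisField 2 m × GaloisField 2 m,
          chi (Algebra.trace (ZMod 2) (GaloisField 2 t) (u * (τ (p.1 * π p.2) + h p.2)) +
               Algebra.trace (ZMod 2) (GaloisField 2 m) (a * p.1) +
               Algebra.trace (ZMod 2) (GaloisField 2 m) (b * p.2))) ^ 2
        = 2 ^ (2 * m) := by
  classical
  intro u hu a b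
  obtain ⟨c, hc⟩ := exists_eq_trace_mul
    (Algebra.trace (ZMod 2) (GaloisField 2 t) ∘ₗ LinearMap.mulLeft (ZMod 2) u ∘ₗ τ)
  simp only [LinearMap.comp_apply, LinearMap.mulLeft_apply] at hc
  have hc0 : c ≠ 0 := by
    rintro rfl
    refine hu (eq_zero_of_forall_trace_mul_eq_zero (K := ZMod 2) fun z => ?_)
    obtain ⟨x, rfl⟩ := hτ z
    rw [hc, zero_mul, map_zero]
  obtain ⟨y₀, hy₀⟩ := hπ.2 (-a / c)
  have hzero (y : GaloisField 2 m) : c * π y + a = 0 ↔ y = y₀ := by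
    rw [← hπ.1.eq_iff (a := y), hy₀, eq_div_iff hc0, eq_neg_iff_add_eq_zero, mul_comm]
  have hterm (x y : GaloisField 2 m) :
      chi (Algebra.trace (ZMod 2) (GaloisField 2 t) (u * (τ (x * π y) + h y)) +
          Algebra.trace (ZMod 2) (GaloisField 2 m) (a * x) +
          Algebra.trace (ZMod 2) (GaloisField 2 m) (b * y)) =
        chi (Algebra.trace (ZMod 2) (GaloisField 2 t) (u * h y) +
          Algebra.trace (ZMod 2) (GaloisField 2 m) (b * y)) *
        chi (Algebra.trace (ZMod 2) (GaloisField 2 m) ((c * π y + a) * x)) := by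
    rw [← chi_add, mul_add, map_add, hc, add_mul, map_add,
      show c * (x * π y) = c * π y * x by ring]
    congr 1
    ring
  simp_rw [Fintype.sum_prod_type_right, hterm, ← Finset.mul_sum, sum_chi_trace_mul hm, hzero]
  simp only [mul_ite, mul_zero, Finset.sum_ite_eq', Finset.mem_univ, if_true]
  rw [mul_pow, chi_sq, one_mul, ← pow_mul, mul_comm]
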